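/- Let γ > -1/2 be real, let α be a real number with α > -1/2 and (γ-1)/2 < α < γ, let δ > 0 be real, and fix t ∈ (0, π]. If F_n^{(γ,γ),δ}(t) > 0 for all n ∈ ℕ (n ≥ 0), then F_n^{(α,α),δ}(t) > 0 for all n ∈ ℕ (n ≥ 0). -/

import Mathlib

open MeasureTheory Real Set

/-- Generalized binomial coefficient `C(u, v) = Γ(u+1) / (Γ(v+1) Γ(u-v+1))`. -/
noncomputable def genBinom (u v : ℝ) : ℝ :=
  Real.Gamma (u + 1) / (Real.Gamma (v + 1) * Real.Gamma (u - v + 1))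

/-- Jacobi polynomial `P_n^{(a,b)}(x)`. -/
noncomputable def jacobiP (n : ℕ) (a b x : ℝ) : ℝ :=
  ∑ k ∈ Finset.range (n + 1),
    genBinom ((n : ℝ) + a) ((n : ℝ) - (k : ℝ)) * genBinom ((n : ℝ) + b) (k : ℝ) *
      ((x - 1) / 2) ^ k * ((x + 1) / 2) ^ (n - k)

/-- `F_n^{(α,β),δ}(t)`. -/
noncomputable def FJ (n : ℕ) (α β δ t : ℝ) : ℝ :=
  ∫ θ in (0:ℝ)..t, (t - θ) ^ δ * jacobiP n (α - 1/2) (β - 1/2) (Real.cos θ) *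
    (Real.sin (θ / 2)) ^ (2 * α) * (Real.cos (θ / 2)) ^ (2 * β)


section
open Polynomial

noncomputable def Lop (γ : ℝ) (p : ℝ[X]) : ℝ[X] :=
  -((1 - X ^ 2) * derivative (derivative p)) + C (2 * γ + 1) * (X * derivative p)

lemma Lop_coeff (γ : ℝ) (p : ℝ[X]) (k : ℕ) :
    (Lop γ p).coeff k = k * (k + 2 * γ) * p.coeff k - (k + 2) * (k + 1) * p.coeff (k + 2) := by
  have e : Lop γ p = C (2 * γ + 1) * (X * derivative p) + X * (X * derivative (derivative p))
      - derivative (derivative p) := by unfold Lop; ring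
  rw [e, coeff_sub, coeff_add, coeff_C_mul]
  rcases k with _ | _ | k
  · simp [coeff_derivative]
    try ring
  · simp [coeff_X_mul, coeff_derivative]
    try ring
  · simp only [coeff_X_mul, coeff_derivative]
    push_cast
    ring

lemma Lop_uniq {γ : ℝ} (hγ : -1/2 < γ) {m : ℕ} {p : ℝ[X]}
    (h : Lop γ p = C ((m:ℝ) * (m + 2 * γ)) * p) (h0 : p.coeff m = 0) : p = 0 := by
  by_contra hp
  have h1 := congrArg (fun q => q.coeff p.natDegree) h
  simp only [Lop_coeff, coeff_C_mul] at h1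
  rw [coeff_eq_zero_of_natDegree_lt (n := p.natDegree + 2) (by omega)] at h1
  have hl : p.coeff p.natDegree ≠ 0 := by simpa using hp
  have hne : p.natDegree ≠ m := by intro hh; rw [hh] at hl; exact hl h0
  have h2 : ((p.natDegree:ℝ) - m) * (p.natDegree + m + 2 * γ) = 0 := by
    apply mul_right_cancel₀ hl
    linarith
  rcases mul_eq_zero.mp h2 with h3 | h3
  · apply hne; exact_mod_cast sub_eq_zero.mp h3
  · have : 1 ≤ p.natDegree + m := by omega
    have : (1:ℝ) ≤ p.natDegree + m := by exact_mod_cast this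
    linarith

noncomputable def cJ (n : ℕ) (a : ℝ) (k : ℕ) : ℝ :=
  genBinom ((n : ℝ) + a) ((n : ℝ) - (k : ℝ)) * genBinom ((n : ℝ) + a) (k : ℝ)

lemma cJ_pos {n k : ℕ} {a : ℝ} (ha : -1 < a) (hk : k ≤ n) : 0 < cJ n a k := by
  have hk' : (k:ℝ) ≤ n := by exact_mod_cast hk
  have hk0 : (0:ℝ) ≤ k := by positivity
  unfold cJ genBinom
  have h1 := Real.Gamma_pos_of_pos (s := (n:ℝ) + a + 1) (by linarith)
  have h2 := Real.Gamma_pos_of_pos (s := (n:ℝ) - k + 1) (by linarith)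
  have h3 := Real.Gamma_pos_of_pos (s := (n:ℝ) + a - (n - k) + 1) (by linarith)
  have h4 := Real.Gamma_pos_of_pos (s := (k:ℝ) + 1) (by linarith)
  have h5 := Real.Gamma_pos_of_pos (s := (n:ℝ) + a - k + 1) (by linarith)
  positivity

lemma cJ_succ {n k : ℕ} {a : ℝ} (ha : -1 < a) (hk : k + 1 ≤ n) :
    cJ n a (k+1) * ((k+1) * (k + 1 + a)) = cJ n a k * ((n - k) * (n - k + a)) := by
  have hk' : (k:ℝ) + 1 ≤ n := by exact_mod_cast hk
  have hk0 : (0:ℝ) ≤ k := by positivity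
  unfold cJ genBinom
  have h2 := Real.Gamma_pos_of_pos (s := (n:ℝ) - k) (by linarith)
  have h3 := Real.Gamma_pos_of_pos (s := (k:ℝ) + a + 1) (by linarith)
  have h4 := Real.Gamma_pos_of_pos (s := (k:ℝ) + 1) (by linarith)
  have h5 := Real.Gamma_pos_of_pos (s := (n:ℝ) - k + a) (by linarith)
  have e1 : Real.Gamma ((n:ℝ) - k + 1) = (n - k) * Real.Gamma ((n:ℝ) - k) :=
    Real.Gamma_add_one (by linarith)
  have e2 : Real.Gamma ((k:ℝ) + a + 1 + 1) = (k + a + 1) * Real.Gamma ((k:ℝ) + a + 1) :=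
    Real.Gamma_add_one (by linarith)
  have e3 : Real.Gamma ((k:ℝ) + 1 + 1) = (k + 1) * Real.Gamma ((k:ℝ) + 1) :=
    Real.Gamma_add_one (by linarith)
  have e4 : Real.Gamma ((n:ℝ) - k + a + 1) = (n - k + a) * Real.Gamma ((n:ℝ) - k + a) :=
    Real.Gamma_add_one (by linarith)
  push_cast
  rw [show (n:ℝ) - (k + 1) + 1 = n - k by ring, show (n:ℝ) + a - (n - (k + 1)) + 1 = k + a + 1 + 1 by ring,
    show (n:ℝ) + a - (k + 1) + 1 = n - k + a by ring, show (n:ℝ) + a - (n - k) + 1 = k + a + 1 by ring,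
    show (n:ℝ) + a - k + 1 = n - k + a + 1 by ring, e1, e2, e3, e4]
  have : (n:ℝ) - k ≠ 0 := by linarith
  have : (k:ℝ) + a + 1 ≠ 0 := by linarith
  have : (k:ℝ) + 1 ≠ 0 := by linarith
  have : (n:ℝ) - k + a ≠ 0 := by linarith
  field_simp
  ring

noncomputable def uP : ℝ[X] := C (1/2) * (X - 1)
noncomputable def vP : ℝ[X] := C (1/2) * (X + 1)

noncomputable def JP (n : ℕ) (a : ℝ) : ℝ[X] :=
  ∑ k ∈ Finset.range (n + 1), C (cJ n a k) * (uP ^ k * vP ^ (n - k))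

lemma JP_eval (n : ℕ) (a x : ℝ) : (JP n a).eval x = jacobiP n a a x := by
  unfold JP jacobiP uP vP cJ
  rw [eval_finsetSum]
  apply Finset.sum_congr rfl
  intro k _
  simp
  ring

lemma C_two : (C 2 : ℝ[X]) = 2 := rfl

lemma C_half : (C (1/2) : ℝ[X]) * 2 = 1 := by
  rw [show (2 : ℝ[X]) = C 2 from rfl, ← C_mul]; norm_num

lemma Lop_uv (a : ℝ) (k l : ℕ) :
    Lop (a + 1/2) (uP ^ k * vP ^ l) =
      C ((k:ℝ) * (k + a)) * (uP ^ (k-1) * vP ^ (l+1)) + C ((l:ℝ) * (l + a)) * (uP ^ (k+1) * vP ^ (l-1))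
      + C (2 * k * l + (a+1) * (k + l)) * (uP ^ k * vP ^ l) := by
  have du : derivative uP = C (1/2) := by simp [uP]
  have dv : derivative vP = C (1/2) := by simp [vP]
  apply Polynomial.funext
  intro x
  have eu : uP.eval x = (x - 1) / 2 := by simp [uP]; ring
  have ev : vP.eval x = (x + 1) / 2 := by simp [vP]; ring
  unfold Lop
  rcases k with _ | _ | k <;> rcases l with _ | _ | l <;>
  simp [derivative_mul, derivative_pow, du, dv, eu, ev] <;> ring

lemma JP_eigen (n : ℕ) {a : ℝ} (ha : -1 < a) :
    Lop (a + 1/2) (JP n a) = C ((n:ℝ) * (n + 2 * (a + 1/2))) * JP n a := by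
  have hlin : Lop (a + 1/2) (JP n a) = ∑ k ∈ Finset.range (n + 1),
      C (cJ n a k) * Lop (a + 1/2) (uP ^ k * vP ^ (n - k)) := by
    unfold JP Lop
    simp only [derivative_sum, derivative_C_mul, Finset.mul_sum]
    rw [← Finset.sum_neg_distrib, ← Finset.sum_add_distrib]
    apply Finset.sum_congr rfl; intro k _; ring
  rw [hlin]
  have key1 : ∑ k ∈ Finset.range (n + 1), C (cJ n a k) * (C ((k:ℝ) * (k + a)) * (uP ^ (k-1) * vP ^ ((n-k)+1)))
      = ∑ k ∈ Finset.range (n + 1), C (cJ n a k) * (C (((n:ℝ)-k) * (n - k + a)) * (uP ^ k * vP ^ (n-k))) := by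
    rw [Finset.sum_range_succ', Finset.sum_range_succ]
    simp only [Nat.cast_zero, zero_mul, sub_self, C_0, mul_zero, add_zero]
    apply Finset.sum_congr rfl; intro k hk
    have hk : k < n := Finset.mem_range.mp hk
    rw [← mul_assoc (C _) (C _), ← mul_assoc (C _) (C _), ← C_mul, ← C_mul, ← cJ_succ ha (by omega),
      show n - (k+1) + 1 = n - k by omega]
    push_cast
    simp
  have key2 : ∑ k ∈ Finset.range (n + 1), C (cJ n a k) * (C (((n - k : ℕ):ℝ) * ((n - k : ℕ) + a)) * (uP ^ (k+1) * vP ^ ((n-k)-1)))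
      = ∑ k ∈ Finset.range (n + 1), C (cJ n a k) * (C ((k:ℝ) * (k + a)) * (uP ^ k * vP ^ (n-k))) := by
    rw [Finset.sum_range_succ, Finset.sum_range_succ']
    simp only [Nat.cast_zero, zero_mul, Nat.sub_self, C_0, mul_zero, add_zero]
    apply Finset.sum_congr rfl; intro k hk
    have hk : k < n := Finset.mem_range.mp hk
    have e : ((n - k : ℕ):ℝ) = n - k := by rw [Nat.cast_sub hk.le]
    rw [← mul_assoc (C _) (C _), ← mul_assoc (C _) (C _), ← C_mul, ← C_mul, e, ← cJ_succ ha (by omega),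
      show n - (k+1) = n - k - 1 by omega]
    push_cast
    rfl
  simp only [Lop_uv, mul_add (C (cJ n a _))]
  rw [Finset.sum_add_distrib, Finset.sum_add_distrib, key1, key2, ← Finset.sum_add_distrib,
    ← Finset.sum_add_distrib]
  unfold JP
  rw [Finset.mul_sum]
  apply Finset.sum_congr rfl; intro k hk
  have hk : k ≤ n := by have := Finset.mem_range.mp hk; omega
  rw [Nat.cast_sub hk]
  simp only [← mul_assoc, ← C_mul]
  rw [← add_mul, ← add_mul, ← add_mul, ← add_mul, ← C_add, ← C_add]
  congr 3
  ring

noncomputable def sJ (n : ℕ) (a : ℝ) : ℝ := ∑ k ∈ Finset.range (n + 1), cJ n a k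

lemma sJ_pos (n : ℕ) {a : ℝ} (ha : -1 < a) : 0 < sJ n a :=
  Finset.sum_pos (fun k hk => cJ_pos ha (by have := Finset.mem_range.mp hk; omega)) ⟨0, by simp⟩

lemma uv_natDegree {k l n : ℕ} (h : k + l = n) : (uP ^ k * vP ^ l).natDegree ≤ n := by
  have hu : uP.natDegree ≤ 1 := by unfold uP; compute_degree
  have hv : vP.natDegree ≤ 1 := by unfold vP; compute_degree
  refine natDegree_mul_le.trans ?_
  have := natDegree_pow_le_of_le k hu
  have := natDegree_pow_le_of_le l hv
  omega

lemma uv_coeff {k l n : ℕ} (h : k + l = n) : (uP ^ k * vP ^ l).coeff n = (1/2) ^ n := by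
  have hu : uP.natDegree ≤ 1 := by unfold uP; compute_degree
  have hv : vP.natDegree ≤ 1 := by unfold vP; compute_degree
  have h1 := coeff_pow_of_natDegree_le (m := k) hu
  have h2 := coeff_pow_of_natDegree_le (m := l) hv
  have := natDegree_pow_le_of_le k hu
  have := natDegree_pow_le_of_le l hv
  have h3 := coeff_mul_add_eq_of_natDegree_le (f := uP ^ k) (g := vP ^ l) (df := k) (dg := l) (by omega) (by omega)
  rw [← h, h3]
  rw [mul_one] at h1 h2
  rw [h1, h2, pow_add]
  simp [uP, vP, coeff_one]

/-- monic ultraspherical polynomial -/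
noncomputable def yG (γ : ℝ) (m : ℕ) : ℝ[X] := C (2 ^ m / sJ m (γ - 1/2)) * JP m (γ - 1/2)

lemma yG_natDegree (γ : ℝ) (m : ℕ) : (yG γ m).natDegree ≤ m := by
  unfold yG
  refine (natDegree_C_mul_le _ _).trans ?_
  unfold JP
  apply natDegree_sum_le_of_forall_le
  intro k hk
  exact (natDegree_C_mul_le _ _).trans (uv_natDegree (by have := Finset.mem_range.mp hk; omega))

lemma yG_coeff {γ : ℝ} (hγ : -1/2 < γ) (m : ℕ) : (yG γ m).coeff m = 1 := by
  have h := sJ_pos m (a := γ - 1/2) (by linarith)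
  unfold yG
  rw [coeff_C_mul]
  have : (JP m (γ - 1/2)).coeff m = sJ m (γ - 1/2) * (1/2)^m := by
    unfold JP sJ
    rw [finsetSum_coeff, Finset.sum_mul]
    apply Finset.sum_congr rfl; intro k hk
    rw [coeff_C_mul, uv_coeff (by have := Finset.mem_range.mp hk; omega)]
  rw [this]
  rw [div_mul_eq_mul_div, div_eq_one_iff_eq h.ne', mul_comm (sJ _ _), ← mul_assoc, ← mul_pow]; norm_num

lemma yG_eigen {γ : ℝ} (hγ : -1/2 < γ) (m : ℕ) :
    Lop γ (yG γ m) = C ((m:ℝ) * (m + 2 * γ)) * yG γ m := by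
  have h := JP_eigen m (a := γ - 1/2) (by linarith)
  rw [show γ - 1/2 + 1/2 = γ by ring] at h
  have : Lop γ (yG γ m) = C (2 ^ m / sJ m (γ - 1/2)) * Lop γ (JP m (γ - 1/2)) := by
    unfold yG Lop; simp only [derivative_C_mul]; ring
  rw [this, h]; unfold yG; ring

lemma yG_bound {γ : ℝ} (hγ : -1/2 < γ) (m : ℕ) {x : ℝ} (hx : x ∈ Icc (-1:ℝ) 1) :
    |(yG γ m).eval x| ≤ 2 ^ m := by
  have h := sJ_pos m (a := γ - 1/2) (by linarith)
  unfold yG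
  rw [eval_mul, eval_C, abs_mul, abs_of_pos (by positivity)]
  have : |(JP m (γ - 1/2)).eval x| ≤ sJ m (γ - 1/2) := by
    unfold JP sJ
    rw [eval_finsetSum]
    refine (Finset.abs_sum_le_sum_abs _ _).trans (Finset.sum_le_sum ?_)
    intro k hk
    have hc := cJ_pos (a := γ - 1/2) (n := m) (k := k) (by linarith) (by have := Finset.mem_range.mp hk; omega)
    have eu : uP.eval x = (x - 1) / 2 := by simp [uP]; ring
    have ev : vP.eval x = (x + 1) / 2 := by simp [vP]; ring
    rw [eval_mul, eval_C, abs_mul, abs_of_pos hc, eval_mul, eval_pow, eval_pow, eu, ev, abs_mul, abs_pow, abs_pow]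
    have b1 : |(x-1)/2| ≤ 1 := by rw [abs_le]; constructor <;> linarith [hx.1, hx.2]
    have b2 : |(x+1)/2| ≤ 1 := by rw [abs_le]; constructor <;> linarith [hx.1, hx.2]
    have := mul_le_one₀ (pow_le_one₀ (abs_nonneg _) b1 (n := k)) (by positivity) (pow_le_one₀ (abs_nonneg _) b2 (n := m - k))
    nlinarith
  rw [div_mul_eq_mul_div, div_le_iff₀ h]
  gcongr

lemma yG_eq_of {γ : ℝ} (hγ : -1/2 < γ) {m : ℕ} {p : ℝ[X]}
    (h : Lop γ p = C ((m:ℝ) * (m + 2 * γ)) * p) : p = C (p.coeff m) * yG γ m := by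
  rw [← sub_eq_zero]
  apply Lop_uniq hγ (m := m)
  · have : Lop γ (p - C (p.coeff m) * yG γ m) = Lop γ p - C (p.coeff m) * Lop γ (yG γ m) := by
      unfold Lop; simp only [derivative_sub, derivative_C_mul]; ring
    rw [this, h, yG_eigen hγ]; ring
  · rw [coeff_sub, coeff_C_mul, yG_coeff hγ]; ring

lemma yG_deriv {γ : ℝ} (hγ : -1/2 < γ) (m : ℕ) :
    derivative (yG γ (m+1)) = C ((m:ℝ) + 1) * yG (γ + 1) m := by
  have h : Lop (γ+1) (derivative (yG γ (m+1))) =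
      C ((m:ℝ) * (m + 2 * (γ + 1))) * derivative (yG γ (m+1)) := by
    have h1 := congrArg derivative (yG_eigen hγ (m+1))
    unfold Lop at h1 ⊢
    simp [derivative_mul, C_two] at h1 ⊢
    linear_combination h1
  have := yG_eq_of (by linarith) h
  rw [this, coeff_derivative, yG_coeff hγ, one_mul]

/-- raising relation -/
lemma yG_up {γ : ℝ} (hγ : -1/2 < γ) (m : ℕ) :
    X * derivative (yG γ m) + C ((m:ℝ) + 2 * γ) * yG γ m = C (2 * ((m:ℝ) + γ)) * yG (γ + 1) m := by
  have h : Lop (γ+1) (X * derivative (yG γ m) + C ((m:ℝ) + 2 * γ) * yG γ m) =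
      C ((m:ℝ) * (m + 2 * (γ + 1))) * (X * derivative (yG γ m) + C ((m:ℝ) + 2 * γ) * yG γ m) := by
    have h0 := yG_eigen hγ m
    have h1 := congrArg derivative h0
    unfold Lop at h0 h1 ⊢
    simp [derivative_mul, C_two] at h0 h1 ⊢
    linear_combination X * h1 + ((m:ℝ[X]) + 2 * C γ + 2) * h0
  have := yG_eq_of (by linarith) h
  rw [this]
  congr 2
  rw [coeff_add, coeff_C_mul, yG_coeff hγ]
  rcases m with _ | m
  · simp
  · rw [coeff_X_mul, coeff_derivative, yG_coeff hγ]; push_cast; ring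

lemma yG_down {γ : ℝ} (hγ : -1/2 < γ) (m : ℕ) :
    ∃ κ : ℝ, 0 < κ ∧ X * derivative (yG γ (m+2)) = C ((m:ℝ) + 2) * yG γ (m+2) + C κ * yG (γ + 1) m := by
  have h : Lop (γ+1) (X * derivative (yG γ (m+2)) - C ((m:ℝ) + 2) * yG γ (m+2)) =
      C ((m:ℝ) * (m + 2 * (γ + 1))) * (X * derivative (yG γ (m+2)) - C ((m:ℝ) + 2) * yG γ (m+2)) := by
    have h0 := yG_eigen hγ (m+2)
    have h1 := congrArg derivative h0
    unfold Lop at h0 h1 ⊢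
    simp [derivative_mul, C_two] at h0 h1 ⊢
    linear_combination X * h1 + (-(m:ℝ[X])) * h0
  have h2 := yG_eq_of (by linarith) h
  refine ⟨_, ?_, (sub_eq_iff_eq_add'.mp h2)⟩
  have h3 := congrArg (fun q => q.coeff m) (yG_eigen hγ (m+2))
  simp only [Lop_coeff, coeff_C_mul, yG_coeff hγ] at h3
  have h4 : (X * derivative (yG γ (m+2))).coeff m = m * (yG γ (m+2)).coeff m := by
    rcases m with _ | m
    · simp
    · rw [coeff_X_mul, coeff_derivative]; push_cast; ring
  rw [coeff_sub, h4, coeff_C_mul]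
  push_cast at h3
  have hm : (0:ℝ) ≤ m := by positivity
  have h5 : (4 * m + 4 + 4 * γ) * (-(yG γ (m+2)).coeff m) = (m+2) * (m+1) := by
    linear_combination h3
  have : 0 < -(yG γ (m+2)).coeff m := by
    by_contra hh
    have : (4 * m + 4 + 4 * γ) * (-(yG γ (m+2)).coeff m) ≤ 0 :=
      mul_nonpos_of_nonneg_of_nonpos (by linarith) (by linarith)
    nlinarith
  linarith

lemma yG_zero {γ : ℝ} (hγ : -1/2 < γ) : yG γ 0 = 1 := by
  have h := eq_C_of_natDegree_le_zero (yG_natDegree γ 0)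
  rw [yG_coeff hγ] at h; simpa using h

lemma yG_one {γ : ℝ} (hγ : -1/2 < γ) : X * derivative (yG γ 1) = yG γ 1 := by
  have h1 := yG_up hγ 1
  have h2 := yG_deriv hγ 0
  have h3 := yG_eigen hγ 1
  unfold Lop at h3
  rw [yG_zero (by linarith)] at h2
  simp at h2
  simp [h2, C_two] at h3
  rw [h2, mul_one]
  have hne : (C (1 + 2 * γ) : ℝ[X]) ≠ 0 := by
    rw [Ne, C_eq_zero]; linarith
  apply mul_left_cancel₀ hne
  simp only [C_add, C_mul, map_one, C_two]
  linear_combination h3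

/-- `y_m^{γ+1} = y_m^γ + κ y_{m-2}^{γ+1}` -/
lemma yG_shift {γ : ℝ} (hγ : -1/2 < γ) (m : ℕ) :
    ∃ κ : ℝ, 0 < κ ∧ yG (γ + 1) (m+2) = yG γ (m+2) + C κ * yG (γ + 1) m := by
  obtain ⟨κ, hκ, h⟩ := yG_down hγ m
  have h1 := yG_up hγ (m+2)
  have hm : (0:ℝ) ≤ m := by positivity
  have hp : 0 < 2 * ((m:ℝ) + 2 + γ) := by linarith
  refine ⟨κ / (2 * ((m:ℝ) + 2 + γ)), by positivity, ?_⟩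
  have hne : (C (2 * ((m:ℝ) + 2 + γ)) : ℝ[X]) ≠ 0 := by
    rw [Ne, C_eq_zero]; linarith
  apply mul_left_cancel₀ hne
  rw [mul_add (C (2 * ((m:ℝ) + 2 + γ))), ← mul_assoc _ (C (κ / _)) , ← C_mul, mul_div_cancel₀ _ hp.ne']
  push_cast at h1
  rw [← h1, h]
  simp only [C_add, C_mul, C_two]
  ring

lemma yG_shift1 {γ : ℝ} (hγ : -1/2 < γ) : yG (γ + 1) 1 = yG γ 1 := by
  have h1 := yG_up hγ 1
  rw [yG_one hγ] at h1
  have hne : (C (2 * (((1:ℕ):ℝ) + γ)) : ℝ[X]) ≠ 0 := by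
    rw [Ne, C_eq_zero]; push_cast; linarith
  apply mul_left_cancel₀ hne
  rw [← h1]
  simp only [C_add, C_mul, C_two, Nat.cast_one, map_one]
  ring

/-- expansion -/
lemma yG_span {γ : ℝ} (hγ : -1/2 < γ) (M : ℕ) : ∀ p : ℝ[X], p.degree < M →
    ∃ b : ℕ → ℝ, p = ∑ m ∈ Finset.range M, C (b m) * yG γ m := by
  induction M with
  | zero => intro p hp; exact ⟨fun _ => 0, by simpa using hp⟩
  | succ M ih =>
    intro p hp
    have hd : (p - C (p.coeff M) * yG γ M).degree < M := by
      rw [degree_lt_iff_coeff_zero]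
      intro k hk
      rcases hk.eq_or_lt with rfl | hk
      · rw [coeff_sub, coeff_C_mul, yG_coeff hγ]; ring
      · rw [coeff_sub, coeff_C_mul, coeff_eq_zero_of_natDegree_lt ((yG_natDegree γ M).trans_lt hk),
          (degree_lt_iff_coeff_zero _ _).mp hp k hk]; ring
    obtain ⟨b, hb⟩ := ih _ hd
    refine ⟨fun m => if m = M then p.coeff M else b m, ?_⟩
    rw [Finset.sum_range_succ]
    refine (sub_eq_iff_eq_add.mp hb).trans ?_
    congr 1
    · apply Finset.sum_congr rfl
      intro m hm
      simp only [if_neg (Finset.mem_range.mp hm).ne]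
    · simp
end

section
open Polynomial

lemma wint {γ : ℝ} (hγ : -1/2 < γ) :
    IntervalIntegrable (fun θ => (sin θ) ^ (2 * γ)) volume 0 π := by
  rcases le_or_gt 0 γ with h | h
  · apply Continuous.intervalIntegrable
    exact continuous_sin.rpow_const (fun x => Or.inr (by linarith))
  · have i1 : IntervalIntegrable (fun θ : ℝ => θ ^ (2 * γ)) volume 0 π :=
      intervalIntegral.intervalIntegrable_rpow' (by linarith)
    have i2 : IntervalIntegrable (fun θ : ℝ => (π - θ) ^ (2 * γ)) volume 0 π := by
      have := (i1.comp_sub_left π).symm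
      simpa using this
    have i3 := (i1.add i2).const_mul ((2 / π) ^ (2 * γ))
    apply i3.mono_fun
    · exact (measurable_sin.pow_const _).aestronglyMeasurable
    · rw [uIoc_of_le pi_pos.le, ← restrict_Ioo_eq_restrict_Ioc]
      refine (ae_restrict_iff' measurableSet_Ioo).mpr (ae_of_all _ ?_)
      intro θ hθ
      have hs : 0 < sin θ := sin_pos_of_mem_Ioo hθ
      have p1 : 0 < θ := hθ.1
      have p2 : 0 < π - θ := by linarith [hθ.2]
      have q1 : 0 < θ ^ (2 * γ) := rpow_pos_of_pos p1 _
      have q2 : 0 < (π - θ) ^ (2 * γ) := rpow_pos_of_pos p2 _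
      have q3 : 0 < (2 / π) ^ (2 * γ) := rpow_pos_of_pos (by positivity) _
      beta_reduce
      rw [norm_of_nonneg (rpow_nonneg hs.le _), norm_of_nonneg (by positivity)]
      rcases le_total θ (π/2) with h1 | h1
      · have h2 : 2 / π * θ ≤ sin θ := mul_le_sin p1.le h1
        have h3 := rpow_le_rpow_of_nonpos (by positivity) h2 (show 2 * γ ≤ 0 by linarith)
        rw [mul_rpow (by positivity) p1.le] at h3
        nlinarith
      · have h2 : 2 / π * (π - θ) ≤ sin (π - θ) := mul_le_sin p2.le (by linarith)
        rw [sin_pi_sub] at h2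
        have h3 := rpow_le_rpow_of_nonpos (by positivity) h2 (show 2 * γ ≤ 0 by linarith)
        rw [mul_rpow (by positivity) p2.le] at h3
        nlinarith

lemma hint {γ : ℝ} (hγ : -1/2 < γ) {h : ℝ → ℝ} (hh : ContinuousOn h (Icc 0 π)) :
    IntervalIntegrable (fun θ => h θ * (sin θ) ^ (2 * γ)) volume 0 π := by
  apply (wint hγ).continuousOn_mul
  rwa [uIcc_of_le pi_pos.le]

lemma pcont (p : ℝ[X]) : Continuous (fun θ => p.eval (cos θ)) := p.continuous.comp continuous_cos

lemma pint {γ : ℝ} (hγ : -1/2 < γ) (p : ℝ[X]) :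
    IntervalIntegrable (fun θ => p.eval (cos θ) * (sin θ) ^ (2 * γ)) volume 0 π :=
  hint hγ (pcont p).continuousOn

noncomputable def BB (γ : ℝ) (p : ℝ[X]) : ℝ := ∫ θ in (0:ℝ)..π, p.eval (cos θ) * (sin θ) ^ (2 * γ)

lemma BB_add {γ : ℝ} (hγ : -1/2 < γ) (p q : ℝ[X]) : BB γ (p + q) = BB γ p + BB γ q := by
  unfold BB
  rw [← intervalIntegral.integral_add (pint hγ p) (pint hγ q)]
  simp only [eval_add, add_mul]

lemma BB_C_mul (γ c : ℝ) (p : ℝ[X]) : BB γ (C c * p) = c * BB γ p := by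
  unfold BB
  rw [← intervalIntegral.integral_const_mul]
  simp only [eval_mul, eval_C, mul_assoc]

lemma BB_sub {γ : ℝ} (hγ : -1/2 < γ) (p q : ℝ[X]) : BB γ (p - q) = BB γ p - BB γ q := by
  have := BB_add hγ (p - q) q
  rw [sub_add_cancel] at this; linarith

lemma BB_zero (γ : ℝ) : BB γ 0 = 0 := by simp [BB]

lemma BB_sum {γ : ℝ} (hγ : -1/2 < γ) (s : Finset ℕ) (f : ℕ → ℝ[X]) :
    BB γ (∑ i ∈ s, f i) = ∑ i ∈ s, BB γ (f i) := by
  classical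
  induction s using Finset.induction_on with
  | empty => simp [BB_zero]
  | insert a s ha ih => rw [Finset.sum_insert ha, Finset.sum_insert ha, BB_add hγ, ih]

lemma BB_energy {γ : ℝ} (hγ : -1/2 < γ) (p q : ℝ[X]) :
    BB γ (Lop γ p * q) = BB γ ((1 - X ^ 2) * (derivative p * derivative q)) := by
  rw [← sub_eq_zero, ← BB_sub hγ]
  have hp := pi_pos
  have key := intervalIntegral.integral_eq_sub_of_hasDerivAt_of_le (a := 0) (b := π) pi_pos.le
    (f := fun θ => (sin θ) ^ (2 * γ + 1) * (derivative p * q).eval (cos θ))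
    (f' := fun θ => (Lop γ p * q - (1 - X ^ 2) * (derivative p * derivative q)).eval (cos θ) * (sin θ) ^ (2 * γ))
    ?_ ?_ (pint hγ _)
  · unfold BB
    rw [key]
    simp [zero_rpow (show 2 * γ + 1 ≠ 0 by linarith)]
  · apply Continuous.continuousOn
    exact (continuous_sin.rpow_const (fun x => Or.inr (by linarith))).mul (pcont _)
  · intro θ hθ
    have hs : 0 < sin θ := sin_pos_of_mem_Ioo hθ
    have d1 : HasDerivAt (fun θ => (sin θ) ^ (2 * γ + 1)) (cos θ * (2 * γ + 1) * sin θ ^ (2 * γ + 1 - 1)) θ :=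
      (hasDerivAt_sin θ).rpow_const (Or.inl hs.ne')
    have d2 : HasDerivAt (fun θ => (derivative p * q).eval (cos θ)) _ θ :=
      ((derivative p * q).hasDerivAt (cos θ)).comp θ (hasDerivAt_cos θ)
    refine (d1.mul d2).congr_deriv ?_
    rw [show 2 * γ + 1 - 1 = 2 * γ by ring, rpow_add_one hs.ne']
    unfold Lop
    simp [derivative_mul]
    have := sin_sq_add_cos_sq θ
    linear_combination (-(eval (cos θ) (derivative (derivative p)) * eval (cos θ) q + eval (cos θ) (derivative p) * eval (cos θ) (derivative q))) * (sin θ) ^ (2 * γ) * this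

lemma BB_symm {γ : ℝ} (hγ : -1/2 < γ) (p q : ℝ[X]) :
    BB γ (Lop γ p * q) = BB γ (p * Lop γ q) := by
  rw [BB_energy hγ, mul_comm p, BB_energy hγ, mul_comm (derivative p)]

lemma BB_orth {γ : ℝ} (hγ : -1/2 < γ) {m n : ℕ} (hmn : m ≠ n) : BB γ (yG γ m * yG γ n) = 0 := by
  have h := BB_symm hγ (yG γ m) (yG γ n)
  rw [yG_eigen hγ, yG_eigen hγ, mul_assoc, mul_left_comm (yG γ m), BB_C_mul, BB_C_mul] at h
  have h2 : (((m:ℝ) - n) * (m + n + 2 * γ)) * BB γ (yG γ m * yG γ n) = 0 := by linear_combination h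
  rcases mul_eq_zero.mp h2 with h3 | h3
  · exfalso
    rcases mul_eq_zero.mp h3 with h3 | h3
    · apply hmn; exact_mod_cast sub_eq_zero.mp h3
    · have : 1 ≤ m + n := by omega
      have : (1:ℝ) ≤ m + n := by exact_mod_cast this
      linarith
  · exact h3

lemma BB_orth_lt {γ : ℝ} (hγ : -1/2 < γ) {n : ℕ} {p : ℝ[X]} (hp : p.degree < n) :
    BB γ (p * yG γ n) = 0 := by
  obtain ⟨b, hb⟩ := yG_span hγ n p hp
  rw [hb, Finset.sum_mul, BB_sum hγ]
  apply Finset.sum_eq_zero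
  intro m hm
  rw [mul_assoc, BB_C_mul, BB_orth hγ (Finset.mem_range.mp hm).ne, mul_zero]

noncomputable def hN (γ : ℝ) (m : ℕ) : ℝ := BB γ (yG γ m * yG γ m)

lemma BB_shift {γ : ℝ} (hγ : -1/2 < γ) (p : ℝ[X]) : BB γ ((1 - X^2) * p) = BB (γ+1) p := by
  unfold BB
  apply intervalIntegral.integral_congr_ae
  rw [uIoc_of_le pi_pos.le]
  have : ∀ᵐ θ : ℝ, θ ≠ π := by simp [ae_iff]
  filter_upwards [this] with θ h1 h2
  have hs : 0 < sin θ := sin_pos_of_mem_Ioo ⟨h2.1, lt_of_le_of_ne h2.2 h1⟩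
  rw [show 2 * (γ + 1) = 2 * γ + (2:ℕ) by push_cast; ring, rpow_add_natCast hs.ne']
  simp
  rw [cos_sq']; ring

lemma hN_succ {γ : ℝ} (hγ : -1/2 < γ) (m : ℕ) :
    ((m:ℝ) + 1 + 2 * γ) * hN γ (m+1) = (m + 1) * hN (γ + 1) m := by
  have h := BB_energy hγ (yG γ (m+1)) (yG γ (m+1))
  rw [yG_eigen hγ, mul_assoc, BB_C_mul, BB_shift hγ, yG_deriv hγ] at h
  rw [show C ((m:ℝ) + 1) * yG (γ + 1) m * (C ((m:ℝ) + 1) * yG (γ + 1) m)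
    = C (((m:ℝ) + 1) * (m + 1)) * (yG (γ + 1) m * yG (γ + 1) m) by rw [C_mul]; ring, BB_C_mul] at h
  have hm : (m:ℝ) + 1 ≠ 0 := by positivity
  apply mul_left_cancel₀ hm
  unfold hN
  push_cast at h
  linear_combination h

lemma hN_zero {γ : ℝ} (hγ : -1/2 < γ) : hN γ 0 = ∫ θ in (0:ℝ)..π, (sin θ) ^ (2 * γ) := by
  simp [hN, yG_zero hγ, BB]

lemma hN_zero_pos {γ : ℝ} (hγ : -1/2 < γ) : 0 < hN γ 0 := by
  rw [hN_zero hγ]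
  exact intervalIntegral.intervalIntegral_pos_of_pos_on (wint hγ)
    (fun θ hθ => rpow_pos_of_pos (sin_pos_of_mem_Ioo hθ) _) pi_pos

lemma hN_zero_lower {s : ℝ} (hs : 0 ≤ s) : π / 4 * (1/4) ^ s ≤ hN s 0 := by
  have hp := pi_pos
  rw [hN_zero (by linarith)]
  have i1 := wint (γ := s) (by linarith)
  have h1 : ∫ θ in (π/4)..(π/2), (sin θ) ^ (2 * s) ≤ ∫ θ in (0:ℝ)..π, (sin θ) ^ (2 * s) := by
    apply intervalIntegral.integral_mono_interval (by positivity) (by linarith) (by linarith) _ i1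
    rw [Filter.EventuallyLE, ae_restrict_iff' measurableSet_Ioc]
    refine ae_of_all _ ?_
    intro θ hθ
    exact rpow_nonneg (sin_nonneg_of_nonneg_of_le_pi hθ.1.le hθ.2) _
  refine le_trans ?_ h1
  have h2 : ∫ θ in (π/4)..(π/2), (1/4:ℝ) ^ s ≤ ∫ θ in (π/4)..(π/2), (sin θ) ^ (2 * s) := by
    apply intervalIntegral.integral_mono_on (by linarith) (by simp)
    · apply i1.mono_set
      rw [uIcc_of_le (by linarith), uIcc_of_le (by linarith)]
      exact Icc_subset_Icc (by linarith) (by linarith)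
    · intro θ hθ
      have h3 : 2 / π * θ ≤ sin θ := mul_le_sin (by linarith [hθ.1]) hθ.2
      have h4 : 1/2 ≤ 2 / π * θ := by
        rw [div_mul_eq_mul_div, le_div_iff₀ hp]; linarith [hθ.1]
      have h5 : (1/2:ℝ) ≤ sin θ := h4.trans h3
      rw [rpow_mul (by linarith)]
      apply rpow_le_rpow (by norm_num) _ hs
      rw [rpow_two]; nlinarith
  refine le_trans ?_ h2
  rw [intervalIntegral.integral_const, smul_eq_mul]
  apply le_of_eq; ring

lemma hN_pos (m : ℕ) : ∀ {γ : ℝ}, -1/2 < γ → 0 < hN γ m := by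
  induction m with
  | zero => intro γ hγ; exact hN_zero_pos hγ
  | succ m ih =>
    intro γ hγ
    have h := hN_succ hγ m
    have h1 := ih (γ := γ + 1) (by linarith)
    have hm : (0:ℝ) ≤ m := by positivity
    have h2 : 0 < ((m:ℝ) + 1) * hN (γ + 1) m := by positivity
    rw [← h] at h2
    exact (pos_iff_pos_of_mul_pos h2).mp (by linarith)

lemma hN_lower (m : ℕ) : ∀ {γ : ℝ}, -1/2 < γ →
    hN (m + γ) 0 ≤ (2 * (m + γ) + 2) ^ m * hN γ m := by
  induction m with
  | zero => intro γ hγ; simp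
  | succ m ih =>
    intro γ hγ
    have h := hN_succ hγ m
    have h1 := ih (γ := γ + 1) (by linarith)
    have hm : (0:ℝ) ≤ m := by positivity
    push_cast
    rw [show (m:ℝ) + (γ + 1) = m + 1 + γ by ring] at h1
    refine h1.trans ?_
    rw [pow_succ, mul_assoc]
    have hq : 0 ≤ 2 * ((m:ℝ) + 1 + γ) + 2 := by linarith
    gcongr
    have h3 := hN_pos (m+1) hγ
    have h4 := hN_pos m (γ := γ+1) (by linarith)
    have h5 : ((m:ℝ) + 1) * hN (γ + 1) m ≤ (m + 1) * ((2 * ((m:ℝ) + 1 + γ) + 2) * hN γ (m+1)) := by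
      rw [← h, ← mul_assoc]
      gcongr
      nlinarith
    exact le_of_mul_le_mul_left h5 (by linarith)

lemma conn_aux {γ : ℝ} (hγ : -1/2 < γ) {α : ℝ} (hα : -1/2 < α) (r : ℝ[X]) (k : ℕ) :
    (∀ j ≤ k, 0 ≤ BB α (yG γ j * r)) → 0 ≤ BB α (yG (γ + 1) k * r) := by
  induction k using Nat.strong_induction_on with
  | _ k ih =>
    intro h
    rcases k with _ | _ | k
    · rw [yG_zero (by linarith)]; have := h 0 le_rfl; rwa [yG_zero hγ] at this
    · rw [zero_add, yG_shift1 hγ]; exact h 1 le_rfl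
    · obtain ⟨κ, hκ, e⟩ := yG_shift hγ k
      rw [e, add_mul, BB_add hα, mul_assoc, BB_C_mul]
      have h1 := ih k (by omega) (fun j hj => h j (by omega))
      have h2 := h (k+2) le_rfl
      exact add_nonneg h2 (mul_nonneg hκ.le h1)

lemma conn_eq {γ : ℝ} (hγ : -1/2 < γ) {α : ℝ} (hα : -1/2 < α) (hαγ : α < γ) (n : ℕ) :
    BB α (yG γ n * yG α n) = hN α n := by
  have hd : (yG γ n - yG α n).degree < n := by
    rw [degree_lt_iff_coeff_zero]
    intro k hk
    rcases hk.eq_or_lt with rfl | hk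
    · rw [coeff_sub, yG_coeff hγ, yG_coeff hα]; ring
    · rw [coeff_sub, coeff_eq_zero_of_natDegree_lt ((yG_natDegree γ n).trans_lt hk),
          coeff_eq_zero_of_natDegree_lt ((yG_natDegree α n).trans_lt hk)]; ring
  have := BB_orth_lt hα hd
  rw [sub_mul, BB_sub hα] at this
  unfold hN; linarith

lemma conn_nonneg {γ : ℝ} (hγ : -1/2 < γ) {α : ℝ} (hα : -1/2 < α) (hαγ : α < γ) (n m : ℕ) :
    0 ≤ BB α (yG γ m * yG α n) := by
  induction m using Nat.strong_induction_on with
  | _ m ih =>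
    rcases lt_trichotomy m n with h | h | h
    · rw [BB_orth_lt hα]
      refine lt_of_le_of_lt (degree_le_of_natDegree_le (yG_natDegree γ m)) (by exact_mod_cast h)
    · rw [h, conn_eq hγ hα hαγ]; exact (hN_pos n hα).le
    · have e1 : Lop α (yG γ m) = C ((m:ℝ) * (m + 2 * γ)) * yG γ m - C (2 * (γ - α)) * (X * derivative (yG γ m)) := by
        rw [← yG_eigen hγ]; unfold Lop
        have : (C (2 * γ + 1) : ℝ[X]) = C (2 * α + 1) + C (2 * (γ - α)) := by rw [← C_add]; congr 1; ring
        rw [this]; ring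
      have e2 := BB_symm hα (yG γ m) (yG α n)
      rw [yG_eigen hα, mul_left_comm (yG γ m), BB_C_mul, e1, sub_mul, BB_sub hα, mul_assoc, BB_C_mul,
        mul_assoc (C _), BB_C_mul] at e2
      have h' : (n:ℝ) + 1 ≤ m := by exact_mod_cast h
      have hn : (0:ℝ) ≤ n := by positivity
      have hpos : 0 < ((m:ℝ) - n) * (m + n + 2 * α) := mul_pos (by linarith) (by linarith)
      have fin : 0 ≤ (((m:ℝ) - n) * (m + n + 2 * α)) * BB α (yG γ m * yG α n) := by
        rcases m with _ | _ | m
        · omega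
        · rw [zero_add, yG_one hγ] at e2
          push_cast at e2 ⊢
          apply le_of_eq; linear_combination -e2
        · obtain ⟨κ, hκ, e⟩ := yG_down hγ m
          rw [e, add_mul, BB_add hα, mul_assoc (C _), BB_C_mul, mul_assoc (C _), BB_C_mul] at e2
          have h1 := conn_aux hγ hα (yG α n) m (fun j hj => ih j (by omega))
          have h2 : 0 ≤ 2 * (γ - α) * (κ * BB α (yG (γ + 1) m * yG α n)) := by
            have : 0 ≤ γ - α := by linarith
            positivity
          refine h2.trans_eq ?_
          push_cast at e2 ⊢
          linear_combination -e2
      by_contra hc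
      push Not at hc
      nlinarith
end

section
open Polynomial

lemma max_aux {γ : ℝ} (hγ : -1/2 < γ) (p : ℝ[X]) :
    ∃ x₀ ∈ Icc (-1:ℝ) 1, (∀ x ∈ Icc (-1:ℝ) 1, p.eval x ≤ p.eval x₀) ∧ 0 ≤ (Lop γ p).eval x₀ := by
  obtain ⟨θ, -, hmax⟩ := isCompact_Icc.exists_isMaxOn (nonempty_Icc.mpr pi_pos.le)
    (pcont p).continuousOn
  have hx : ∀ x ∈ Icc (-1:ℝ) 1, p.eval x ≤ p.eval (cos θ) := by
    intro x hx
    have := hmax (show arccos x ∈ Icc 0 π from ⟨arccos_nonneg x, arccos_le_pi x⟩)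
    simpa [cos_arccos hx.1 hx.2] using this
  refine ⟨cos θ, ⟨neg_one_le_cos θ, cos_le_one θ⟩, hx, ?_⟩
  set u : ℝ → ℝ := fun s => p.eval (cos s) with hu
  have d1 : deriv u = fun s => (derivative p).eval (cos s) * (-sin s) := by
    ext s
    exact ((p.hasDerivAt (cos s)).comp s (hasDerivAt_cos s)).deriv
  have d2 : deriv (deriv u) θ = (derivative (derivative p)).eval (cos θ) * (-sin θ) * (-sin θ)
      + (derivative p).eval (cos θ) * (-cos θ) := by
    rw [d1]
    exact ((((derivative p).hasDerivAt (cos θ)).comp θ (hasDerivAt_cos θ)).mul (hasDerivAt_sin θ).neg).deriv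
  have hlm : IsLocalMax u θ := Filter.Eventually.of_forall
    (fun s => hx _ ⟨neg_one_le_cos s, cos_le_one s⟩)
  have e1 : deriv u θ = 0 := hlm.deriv_eq_zero
  have e2 : deriv (deriv u) θ ≤ 0 := by
    by_contra hc
    push Not at hc
    have hmin := isLocalMin_of_deriv_deriv_pos hc e1 (pcont p).continuousAt
    have hev : u =ᶠ[nhds θ] fun _ => u θ := by
      filter_upwards [hlm, hmin] with s h1 h2 using le_antisymm h1 h2
    have := hev.deriv.deriv_eq
    simp at this
    linarith
  rw [d2] at e2
  rw [d1] at e1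
  have eL : (Lop γ p).eval (cos θ) = -((1 - cos θ ^ 2) * (derivative (derivative p)).eval (cos θ))
     + (2 * γ + 1) * (cos θ * (derivative p).eval (cos θ)) := by simp [Lop]
  rw [eL, ← sin_sq]
  rcases mul_eq_zero.mp e1 with h | h
  · rw [h] at e2 ⊢; nlinarith
  · have h : sin θ = 0 := by linarith
    rw [h] at e2 ⊢
    have : 0 ≤ cos θ * (derivative p).eval (cos θ) := by nlinarith
    have : 0 ≤ (2 * γ + 1) * (cos θ * (derivative p).eval (cos θ)) := mul_nonneg (by linarith) this
    linarith

lemma resolv_bd {γ : ℝ} (hγ : -1/2 < γ) {ε S : ℝ} (hε : 0 ≤ ε) (p : ℝ[X])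
    (h : ∀ x ∈ Icc (-1:ℝ) 1, |(p + C ε * Lop γ p).eval x| ≤ S) :
    ∀ x ∈ Icc (-1:ℝ) 1, |p.eval x| ≤ S := by
  intro x hx
  obtain ⟨x₀, h0, h1, h2⟩ := max_aux hγ p
  obtain ⟨x₁, h3, h4, h5⟩ := max_aux hγ (-p)
  have a1 := (abs_le.mp (h x₀ h0)).2
  have a2 := (abs_le.mp (h x₁ h3)).1
  have e : Lop γ (-p) = - Lop γ p := by unfold Lop; simp only [derivative_neg]; ring
  rw [e] at h5
  simp at a1 a2 h5 h4
  have b1 := h1 x hx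
  have b2 := h4 x hx.1 hx.2
  rw [abs_le]
  constructor <;> nlinarith

noncomputable def lam (γ : ℝ) (m : ℕ) : ℝ := m * (m + 2 * γ)

lemma lam_nonneg {γ : ℝ} (hγ : -1/2 < γ) (m : ℕ) : 0 ≤ lam γ m := by
  unfold lam
  rcases m with _ | m
  · simp
  · have : (0:ℝ) ≤ m := by positivity
    push_cast
    exact mul_nonneg (by linarith) (by linarith)

noncomputable def comb (γ : ℝ) (M : ℕ) (b : ℕ → ℝ) : ℝ[X] := ∑ m ∈ Finset.range M, C (b m) * yG γ m

lemma Lop_comb {γ : ℝ} (hγ : -1/2 < γ) (M : ℕ) (b : ℕ → ℝ) :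
    Lop γ (comb γ M b) = comb γ M (fun m => lam γ m * b m) := by
  have : Lop γ (comb γ M b) = ∑ m ∈ Finset.range M, C (b m) * Lop γ (yG γ m) := by
    unfold comb Lop
    simp only [derivative_sum, derivative_C_mul, Finset.mul_sum]
    rw [← Finset.sum_neg_distrib, ← Finset.sum_add_distrib]
    apply Finset.sum_congr rfl; intro k _; ring
  rw [this]
  unfold comb lam
  apply Finset.sum_congr rfl; intro k _
  rw [yG_eigen hγ, C_mul (a := (k:ℝ) * _)]; ring

lemma comb_add (γ : ℝ) (M : ℕ) (b c : ℕ → ℝ) (r : ℝ) :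
    comb γ M b + C r * comb γ M c = comb γ M (fun m => b m + r * c m) := by
  unfold comb
  rw [Finset.mul_sum, ← Finset.sum_add_distrib]
  apply Finset.sum_congr rfl; intro k _
  rw [C_add, C_mul]; ring

lemma comb_eval (γ : ℝ) (M : ℕ) (b : ℕ → ℝ) (x : ℝ) :
    (comb γ M b).eval x = ∑ m ∈ Finset.range M, b m * (yG γ m).eval x := by
  unfold comb; rw [eval_finsetSum]; simp

lemma resolvent_pow {γ : ℝ} (hγ : -1/2 < γ) {ε S : ℝ} (hε : 0 ≤ ε) (M : ℕ) (b : ℕ → ℝ)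
    (h : ∀ x ∈ Icc (-1:ℝ) 1, |(comb γ M b).eval x| ≤ S) (k : ℕ) :
    ∀ x ∈ Icc (-1:ℝ) 1, |(comb γ M (fun m => b m / (1 + ε * lam γ m) ^ k)).eval x| ≤ S := by
  induction k with
  | zero => simpa using h
  | succ k ih =>
    apply resolv_bd hγ hε
    rw [Lop_comb hγ, comb_add]
    have e : (fun m => b m / (1 + ε * lam γ m) ^ (k+1) + ε * (lam γ m * (b m / (1 + ε * lam γ m) ^ (k+1)))) =
        fun m => b m / (1 + ε * lam γ m) ^ k := by
      ext m
      have h1 := lam_nonneg hγ m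
      have h2 : 0 < 1 + ε * lam γ m := by positivity
      have h3 : (1 + ε * lam γ m) ^ k ≠ 0 := by positivity
      rw [pow_succ, div_mul_eq_div_div]
      have h4 := h2.ne'
      generalize b m / (1 + ε * lam γ m) ^ k = z
      field_simp
    rw [e]
    exact ih

lemma heat_contr {γ : ℝ} (hγ : -1/2 < γ) {t S : ℝ} (ht : 0 ≤ t) (M : ℕ) (b : ℕ → ℝ)
    (h : ∀ x ∈ Icc (-1:ℝ) 1, |(comb γ M b).eval x| ≤ S) :
    ∀ x ∈ Icc (-1:ℝ) 1, |(comb γ M (fun m => exp (-(t * lam γ m)) * b m)).eval x| ≤ S := by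
  intro x hx
  have hlim : Filter.Tendsto (fun k : ℕ => |(comb γ M (fun m => b m / (1 + (t / k) * lam γ m) ^ k)).eval x|)
      Filter.atTop (nhds |(comb γ M (fun m => exp (-(t * lam γ m)) * b m)).eval x|) := by
    apply Filter.Tendsto.abs
    simp only [comb_eval]
    apply tendsto_finsetSum
    intro m _
    apply Filter.Tendsto.mul_const
    rw [exp_neg, mul_comm, ← div_eq_mul_inv]
    apply Filter.Tendsto.div tendsto_const_nhds _ (exp_pos _).ne'
    have := Real.tendsto_one_add_div_pow_exp (t * lam γ m)
    refine this.congr (fun k => ?_)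
    ring
  apply le_of_tendsto hlim
  exact Filter.Eventually.of_forall (fun k => resolvent_pow hγ (by positivity) M b h k x hx)

noncomputable def cf (γ : ℝ) (p : ℝ[X]) (m : ℕ) : ℝ := BB γ (p * yG γ m) / hN γ m

lemma cf_exp {γ : ℝ} (hγ : -1/2 < γ) {p : ℝ[X]} {M : ℕ} (hp : p.degree < M) :
    comb γ M (cf γ p) = p := by
  obtain ⟨b, hb⟩ := yG_span hγ M p hp
  conv_rhs => rw [hb]
  unfold comb
  apply Finset.sum_congr rfl
  intro m hm
  congr 2
  unfold cf
  rw [div_eq_iff (hN_pos m hγ).ne', hb, Finset.sum_mul, BB_sum hγ, Finset.sum_eq_single m]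
  · rw [mul_assoc, BB_C_mul]; rfl
  · intro k _ hk
    rw [mul_assoc, BB_C_mul, BB_orth hγ hk, mul_zero]
  · intro h; exact absurd hm h

lemma cf_zero {γ : ℝ} (hγ : -1/2 < γ) {p : ℝ[X]} {m : ℕ} (hp : p.degree < m) : cf γ p m = 0 := by
  unfold cf; rw [BB_orth_lt hγ hp, zero_div]

lemma cf_sub {γ : ℝ} (hγ : -1/2 < γ) (p q : ℝ[X]) (m : ℕ) : cf γ (p - q) m = cf γ p m - cf γ q m := by
  unfold cf; rw [sub_mul, BB_sub hγ, sub_div]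

noncomputable def TT (γ t : ℝ) (M : ℕ) (p : ℝ[X]) : ℝ[X] :=
  comb γ M (fun m => exp (-(t * lam γ m)) * cf γ p m)

lemma TT_contr {γ : ℝ} (hγ : -1/2 < γ) {t S : ℝ} (ht : 0 ≤ t) {M : ℕ} {p : ℝ[X]} (hp : p.degree < M)
    (h : ∀ x ∈ Icc (-1:ℝ) 1, |p.eval x| ≤ S) :
    ∀ x ∈ Icc (-1:ℝ) 1, |(TT γ t M p).eval x| ≤ S := by
  apply heat_contr hγ ht
  rwa [cf_exp hγ hp]

lemma TT_sub {γ : ℝ} (hγ : -1/2 < γ) (t : ℝ) (M : ℕ) (p q : ℝ[X]) (x : ℝ) :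
    (TT γ t M (p - q)).eval x = (TT γ t M p).eval x - (TT γ t M q).eval x := by
  unfold TT
  simp only [comb_eval, cf_sub hγ]
  rw [← Finset.sum_sub_distrib]
  apply Finset.sum_congr rfl; intro m _; ring

lemma TT_near {γ : ℝ} (hγ : -1/2 < γ) {t : ℝ} (ht : 0 ≤ t) {M M₀ : ℕ} (hM : M₀ ≤ M) {p : ℝ[X]}
    (hp : p.degree < M₀) : ∀ x ∈ Icc (-1:ℝ) 1, |(TT γ t M p).eval x - p.eval x| ≤
      ∑ m ∈ Finset.range M₀, |cf γ p m| * 2 ^ m * (1 - exp (-(t * lam γ m))) := by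
  intro x hx
  have e : (TT γ t M p).eval x = ∑ m ∈ Finset.range M₀, exp (-(t * lam γ m)) * cf γ p m * (yG γ m).eval x := by
    unfold TT; rw [comb_eval]
    symm
    apply Finset.sum_subset (by simpa using hM)
    intro m _ hm
    rw [cf_zero hγ]; · simp
    refine hp.trans_le ?_
    exact_mod_cast (by simpa using hm : M₀ ≤ m)
  have e2 : p.eval x = ∑ m ∈ Finset.range M₀, cf γ p m * (yG γ m).eval x := by
    rw [← comb_eval, cf_exp hγ hp]
  rw [e, e2, ← Finset.sum_sub_distrib]
  refine (Finset.abs_sum_le_sum_abs _ _).trans (Finset.sum_le_sum ?_)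
  intro m _
  have h1 : exp (-(t * lam γ m)) ≤ 1 := by
    rw [exp_le_one_iff]; have := lam_nonneg hγ m; nlinarith [mul_nonneg ht this]
  rw [show exp (-(t * lam γ m)) * cf γ p m * (yG γ m).eval x - cf γ p m * (yG γ m).eval x
    = -(cf γ p m * (yG γ m).eval x * (1 - exp (-(t * lam γ m)))) by ring, abs_neg, abs_mul, abs_mul,
    abs_of_nonneg (sub_nonneg.mpr h1)]
  have := yG_bound hγ m hx
  have : 0 ≤ 1 - exp (-(t * lam γ m)) := by linarith
  gcongr

lemma summ {γ : ℝ} (hγ : -1/2 < γ) {t : ℝ} (ht : 0 < t) :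
    Summable (fun m : ℕ => exp (-(t * lam γ m)) * 4 ^ m / hN γ m) := by
  have hlim : Filter.Tendsto (fun m : ℕ => 16 * (2 * ((m:ℝ) + γ) + 2) * exp (-(t * (m - 1)))) Filter.atTop (nhds 0) := by
    have h1 : Filter.Tendsto (fun x : ℝ => x ^ 1 * exp (-(t * x))) Filter.atTop (nhds 0) := by
      have := Real.tendsto_pow_mul_exp_neg_atTop_nhds_zero 1
      have h2 := (this.comp (Filter.tendsto_id.const_mul_atTop ht)).const_mul (t⁻¹)
      simp only [mul_zero] at h2
      refine h2.congr (fun x => ?_)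
      simp only [Function.comp, id, pow_one]
      field_simp
    have h0 : Filter.Tendsto (fun x : ℝ => exp (-(t * x))) Filter.atTop (nhds 0) := by
      apply Real.tendsto_exp_neg_atTop_nhds_zero.comp (Filter.tendsto_id.const_mul_atTop ht)
    have h3 := ((h1.const_mul 32).add (h0.const_mul (16 * (2 * γ + 2)))).const_mul (exp t)
    simp only [mul_zero, add_zero] at h3
    refine (h3.comp tendsto_natCast_atTop_atTop).congr (fun m => ?_)
    simp only [Function.comp, pow_one]
    rw [show -(t * ((m:ℝ) - 1)) = t + -(t * m) by ring, exp_add]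
    ring
  have hs : Summable (fun m : ℕ => (4 / π * 4 ^ γ) * (1/2 : ℝ) ^ m) :=
    (summable_geometric_of_lt_one (by norm_num) (by norm_num)).mul_left _
  apply Summable.of_norm_bounded_eventually_nat hs
  filter_upwards [hlim.eventually (gt_mem_nhds (show (0:ℝ) < 1/2 by norm_num)), Filter.eventually_ge_atTop 1] with m h1 h2
  have hm : (1:ℝ) ≤ m := by exact_mod_cast h2
  have hh := hN_pos m hγ
  have hl := hN_lower m hγ
  have hl0 := hN_zero_lower (s := m + γ) (by linarith)
  have hp := pi_pos
  rw [norm_of_nonneg (by positivity)]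
  have hQ : 0 < 2 * ((m:ℝ) + γ) + 2 := by linarith
  set Q := 2 * ((m:ℝ) + γ) + 2 with hQdef
  have e1 : (1/4:ℝ) ^ ((m:ℝ) + γ) = ((4:ℝ) ^ m)⁻¹ * ((4:ℝ) ^ γ)⁻¹ := by
    rw [rpow_add (by norm_num), rpow_natCast, one_div, inv_pow, inv_rpow (by norm_num)]
  have h4g : (0:ℝ) < 4 ^ γ := by positivity
  have low : π / 4 * (((4:ℝ) ^ m)⁻¹ * ((4:ℝ) ^ γ)⁻¹) ≤ Q ^ m * hN γ m := by
    rw [← e1]; exact hl0.trans hl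
  have hinv : 1 / hN γ m ≤ 4 / π * 4 ^ γ * (Q ^ m * 4 ^ m) := by
    rw [div_le_iff₀ hh]
    have : 4 / π * 4 ^ γ * 4 ^ m * (π / 4 * (((4:ℝ) ^ m)⁻¹ * ((4:ℝ) ^ γ)⁻¹)) = 1 := by field_simp
    rw [← this]
    have := mul_le_mul_of_nonneg_left low (show 0 ≤ 4 / π * 4 ^ γ * 4 ^ m by positivity)
    refine this.trans_eq ?_; ring
  have hexp : exp (-(t * lam γ m)) ≤ (exp (-(t * (m - 1)))) ^ m := by
    rw [← exp_nat_mul, exp_le_exp]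
    unfold lam
    have : (m:ℝ) * (m - 1) ≤ m * (m + 2 * γ) := by gcongr; linarith
    nlinarith
  calc exp (-(t * lam γ m)) * 4 ^ m / hN γ m
      = exp (-(t * lam γ m)) * 4 ^ m * (1 / hN γ m) := by ring
    _ ≤ (exp (-(t * (m - 1)))) ^ m * 4 ^ m * (4 / π * 4 ^ γ * (Q ^ m * 4 ^ m)) := by gcongr
    _ = 4 / π * 4 ^ γ * (16 * Q * exp (-(t * (m - 1)))) ^ m := by
        rw [mul_pow, mul_pow, show (16:ℝ) = 4 * 4 by norm_num, mul_pow]; ring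
    _ ≤ 4 / π * 4 ^ γ * (1/2) ^ m := by gcongr
end

section
open Polynomial

lemma int_diff {γ : ℝ} (hγ : -1/2 < γ) {f : ℝ → ℝ} {ε : ℝ}
    (h : ∀ θ ∈ Icc 0 π, |f θ| ≤ ε) (r : ℝ[X]) :
    |∫ θ in (0:ℝ)..π, f θ * r.eval (cos θ) * (sin θ) ^ (2 * γ)| ≤
      ε * ∫ θ in (0:ℝ)..π, |r.eval (cos θ)| * (sin θ) ^ (2 * γ) := by
  rw [← intervalIntegral.integral_const_mul, ← Real.norm_eq_abs]
  apply intervalIntegral.norm_integral_le_of_norm_le pi_pos.le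
  · refine Filter.Eventually.of_forall (fun θ hθ => ?_)
    have hθ' : θ ∈ Icc 0 π := ⟨hθ.1.le, hθ.2⟩
    have hs : 0 ≤ (sin θ) ^ (2 * γ) := rpow_nonneg (sin_nonneg_of_mem_Icc hθ') _
    rw [Real.norm_eq_abs, abs_mul, abs_mul, abs_of_nonneg hs, mul_assoc]
    exact mul_le_mul_of_nonneg_right (h θ hθ') (by positivity)
  · exact (hint hγ (h := fun θ => |r.eval (cos θ)|) ((pcont r).abs.continuousOn)).const_mul ε

lemma choose_t {γ : ℝ} (M₀ n : ℕ) (c : ℕ → ℝ) {η : ℝ} (hη : 0 < η) :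
    ∃ t : ℝ, 0 < t ∧ (∑ m ∈ Finset.range M₀, c m * (1 - exp (-(t * lam γ m)))) < η ∧
      1/2 < exp (-(t * lam γ n)) := by
  have c1 : Continuous (fun t : ℝ => ∑ m ∈ Finset.range M₀, c m * (1 - exp (-(t * lam γ m)))) := by fun_prop
  have c2 : Continuous (fun t : ℝ => exp (-(t * lam γ n))) := by fun_prop
  have e1 := (c1.tendsto 0).eventually_lt_const (u := η) (by simpa using hη)
  have e2 := (c2.tendsto 0).eventually_const_lt (u := 1/2) (by simp; norm_num)
  have e3 := (e1.and e2).filter_mono (nhdsWithin_le_nhds (s := Ioi 0))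
  obtain ⟨t, ht, h0⟩ := (e3.and self_mem_nhdsWithin).exists
  exact ⟨t, h0, ht.1, ht.2⟩

set_option maxHeartbeats 1000000 in
lemma main_step {γ α : ℝ} (hγ : -1/2 < γ) (hα : -1/2 < α) (hαγ : α < γ) {g : ℝ → ℝ}
    (hg : ContinuousOn g (Icc 0 π))
    (hJ : ∀ m, 0 ≤ ∫ θ in (0:ℝ)..π, g θ * (yG γ m).eval (cos θ) * (sin θ) ^ (2 * γ)) (n : ℕ)
    {η : ℝ} (hη : 0 < η) :
    1 / 2 * (∫ θ in (0:ℝ)..π, g θ * (yG γ n).eval (cos θ) * (sin θ) ^ (2 * γ)) * hN α n / hN γ n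
      - η * ((hN γ 0 + 4) * ∫ θ in (0:ℝ)..π, |(yG α n).eval (cos θ)| * (sin θ) ^ (2 * α)) ≤
    ∫ θ in (0:ℝ)..π, g θ * (yG α n).eval (cos θ) * (sin θ) ^ (2 * α) := by
  set J : ℕ → ℝ := fun m => ∫ θ in (0:ℝ)..π, g θ * (yG γ m).eval (cos θ) * (sin θ) ^ (2 * γ) with hJd
  set K := ∫ θ in (0:ℝ)..π, |(yG α n).eval (cos θ)| * (sin θ) ^ (2 * α) with hK
  set D := ∫ θ in (0:ℝ)..π, g θ * (yG α n).eval (cos θ) * (sin θ) ^ (2 * α) with hD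
  set μ := hN γ 0 with hμ
  have hμ0 : 0 < μ := hN_pos 0 hγ
  have hK0 : 0 ≤ K := by
    apply intervalIntegral.integral_nonneg pi_pos.le
    intro θ hθ
    exact mul_nonneg (abs_nonneg _) (rpow_nonneg (sin_nonneg_of_mem_Icc hθ) _)
  have hcos : ∀ θ : ℝ, cos θ ∈ Icc (-1:ℝ) 1 := fun θ => ⟨neg_one_le_cos θ, cos_le_one θ⟩
  have hG : ContinuousOn (fun x => g (arccos x)) (Icc (-1) 1) :=
    hg.comp continuous_arccos.continuousOn (fun x _ => ⟨arccos_nonneg x, arccos_le_pi x⟩)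
  obtain ⟨q0, hq0⟩ := exists_polynomial_near_of_continuousOn (-1) 1 _ hG η hη
  obtain ⟨t, ht, ht1, ht2⟩ := choose_t (γ := γ) (q0.natDegree + 1) n (fun m => |cf γ q0 m| * 2 ^ m) hη
  have hsum := summ hγ ht
  set s : ℕ → ℝ := fun m => exp (-(t * lam γ m)) * 4 ^ m / hN γ m with hs
  have hs0 : ∀ m, 0 ≤ s m := fun m => by
    have := hN_pos m hγ
    simp only [hs]; positivity
  set S := ∑' m, s m with hS
  have hS0 : 0 ≤ S := tsum_nonneg hs0
  set ε := η / (1 + S) with hε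
  have hε0 : 0 < ε := by positivity
  have hεη : ε ≤ η := div_le_self hη.le (by linarith)
  have hεS : ε * S ≤ η := by
    rw [hε, div_mul_eq_mul_div, div_le_iff₀ (by linarith)]; nlinarith
  obtain ⟨q, hq⟩ := exists_polynomial_near_of_continuousOn (-1) 1 _ hG ε hε0
  have hqg : ∀ θ ∈ Icc 0 π, |q.eval (cos θ) - g θ| ≤ ε := by
    intro θ hθ
    have := hq _ (hcos θ)
    rw [arccos_cos hθ.1 hθ.2] at this
    exact this.le
  have hq0g : ∀ θ ∈ Icc 0 π, |q0.eval (cos θ) - g θ| ≤ η := by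
    intro θ hθ
    have := hq0 _ (hcos θ)
    rw [arccos_cos hθ.1 hθ.2] at this
    exact this.le
  obtain ⟨M, hM1, hM2, hM3⟩ : ∃ M : ℕ, q0.natDegree + 1 ≤ M ∧ q.natDegree + 1 ≤ M ∧ n < M :=
    ⟨q0.natDegree + 1 + (q.natDegree + 1) + (n + 1), by omega, by omega, by omega⟩
  have hdeg : ∀ (p : ℝ[X]) (N : ℕ), p.natDegree + 1 ≤ N → p.degree < N := by
    intro p N h
    exact lt_of_le_of_lt degree_le_natDegree (by exact_mod_cast h)
  -- closeness
  have hclose : ∀ θ ∈ Icc 0 π, |(TT γ t M q).eval (cos θ) - g θ| ≤ 4 * η := by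
    intro θ hθ
    have k1 : |(TT γ t M (q - q0)).eval (cos θ)| ≤ ε + η := by
      apply TT_contr hγ ht.le _ _ _ (hcos θ)
      · exact lt_of_le_of_lt (degree_sub_le _ _) (max_lt (hdeg _ _ hM2) (hdeg _ _ hM1))
      · intro x hx
        have a := hq x hx
        have b := hq0 x hx
        rw [abs_lt] at a b
        rw [eval_sub, abs_le]
        constructor <;> linarith
    rw [TT_sub hγ] at k1
    have k2 := TT_near hγ ht.le hM1 (hdeg q0 _ le_rfl) _ (hcos θ)
    have k3 := hq0g θ hθ
    have k2' := k2.trans ht1.le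
    rw [abs_le] at k1 k2' k3 ⊢
    constructor <;> linarith
  have hX : BB α (TT γ t M q * yG α n) =
      ∑ m ∈ Finset.range M, exp (-(t * lam γ m)) * cf γ q m * BB α (yG γ m * yG α n) := by
    unfold TT comb
    rw [Finset.sum_mul, BB_sum hα]
    apply Finset.sum_congr rfl
    intro m _
    rw [mul_assoc, BB_C_mul]
  have hXD : |BB α (TT γ t M q * yG α n) - D| ≤ 4 * η * K := by
    have := int_diff hα hclose (yG α n)
    convert this using 2
    rw [hD]
    unfold BB
    rw [← intervalIntegral.integral_sub (pint hα _) (hint hα (h := fun θ => g θ * (yG α n).eval (cos θ)) (hg.mul (pcont _).continuousOn))]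
    congr 1; ext θ; rw [eval_mul]; ring
  have hA : ∀ m, BB α (yG γ m * yG α n) ≤ 2 ^ m * K := by
    intro m
    have := int_diff hα (f := fun θ => (yG γ m).eval (cos θ)) (fun θ _ => yG_bound hγ m (hcos θ)) (yG α n)
    refine le_trans ?_ ((le_abs_self _).trans this)
    unfold BB
    simp only [eval_mul]
    exact le_rfl
  have hcf : ∀ m, J m - ε * 2 ^ m * μ ≤ BB γ (q * yG γ m) := by
    intro m
    have := int_diff hγ (f := fun θ => (q.eval (cos θ) - g θ) * (yG γ m).eval (cos θ)) (ε := ε * 2 ^ m)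
      (fun θ hθ => by
        rw [abs_mul]
        exact mul_le_mul (hqg θ hθ) (yG_bound hγ m (hcos θ)) (abs_nonneg _) hε0.le) 1
    simp only [eval_one, mul_one, abs_one, one_mul] at this
    rw [← hN_zero hγ] at this
    have e : BB γ (q * yG γ m) - J m =
        ∫ θ in (0:ℝ)..π, (q.eval (cos θ) - g θ) * (yG γ m).eval (cos θ) * (sin θ) ^ (2 * γ) := by
      simp only [hJd]
      unfold BB
      rw [← intervalIntegral.integral_sub (pint hγ _) (hint hγ (h := fun θ => g θ * (yG γ m).eval (cos θ)) (hg.mul (pcont _).continuousOn))]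
      congr 1; ext θ; rw [eval_mul]; ring
    rw [← e] at this
    have := (abs_le.mp this).1
    linarith
  have hterm : ∀ m, exp (-(t * lam γ m)) * (J m / hN γ m) * BB α (yG γ m * yG α n) - ε * μ * K * s m ≤
      exp (-(t * lam γ m)) * cf γ q m * BB α (yG γ m * yG α n) := by
    intro m
    have hh := hN_pos m hγ
    have hA0 := conn_nonneg hγ hα hαγ n m
    have h1 : J m / hN γ m - ε * 2 ^ m * μ / hN γ m ≤ cf γ q m := by
      unfold cf
      rw [← sub_div]
      exact div_le_div_of_nonneg_right (hcf m) hh.le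
    have h2 : exp (-(t * lam γ m)) * (J m / hN γ m - ε * 2 ^ m * μ / hN γ m) * BB α (yG γ m * yG α n) ≤
      exp (-(t * lam γ m)) * cf γ q m * BB α (yG γ m * yG α n) :=
      mul_le_mul_of_nonneg_right (mul_le_mul_of_nonneg_left h1 (exp_pos _).le) hA0
    have h3 : exp (-(t * lam γ m)) * (ε * 2 ^ m * μ / hN γ m) * BB α (yG γ m * yG α n) ≤
      exp (-(t * lam γ m)) * (ε * 2 ^ m * μ / hN γ m) * (2 ^ m * K) := by
      apply mul_le_mul_of_nonneg_left (hA m); positivity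
    have h4 : exp (-(t * lam γ m)) * (ε * 2 ^ m * μ / hN γ m) * (2 ^ m * K) = ε * μ * K * s m := by
      simp only [hs]
      rw [show (4:ℝ) = 2 * 2 by norm_num, mul_pow]; ring
    linarith
  have hXlow : 1 / 2 * J n * hN α n / hN γ n - ε * μ * K * S ≤ BB α (TT γ t M q * yG α n) := by
    rw [hX]
    have h1 := Finset.sum_le_sum (s := Finset.range M) (fun m _ => hterm m)
    rw [Finset.sum_sub_distrib, ← Finset.mul_sum] at h1
    have h2 : ∑ m ∈ Finset.range M, s m ≤ S := hsum.sum_le_tsum _ (fun m _ => hs0 m)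
    have h3 := Finset.single_le_sum (s := Finset.range M) (a := n)
      (f := fun m => exp (-(t * lam γ m)) * (J m / hN γ m) * BB α (yG γ m * yG α n))
      (fun m _ => by
        have := hN_pos m hγ
        have := hJ m
        have := conn_nonneg hγ hα hαγ n m
        have : 0 ≤ J m := hJ m
        positivity) (Finset.mem_range.mpr hM3)
    simp only [conn_eq hγ hα hαγ n] at h3
    have h4 : 1 / 2 * J n * hN α n / hN γ n ≤ exp (-(t * lam γ n)) * (J n / hN γ n) * hN α n := by
      have a1 := hN_pos n hγ
      have a2 := hN_pos n hα
      have a3 : 0 ≤ J n := hJ n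
      have : 0 ≤ (J n / hN γ n) * hN α n := by positivity
      calc _ = 1 / 2 * ((J n / hN γ n) * hN α n) := by ring
        _ ≤ exp (-(t * lam γ n)) * ((J n / hN γ n) * hN α n) := by gcongr
        _ = _ := by ring
    have h5 : ε * μ * K * ∑ m ∈ Finset.range M, s m ≤ ε * μ * K * S :=
      mul_le_mul_of_nonneg_left h2 (by positivity)
    linarith
  have h6 : ε * μ * K * S ≤ η * μ * K := by
    have := mul_le_mul_of_nonneg_right hεS (mul_nonneg hμ0.le hK0)
    linarith
  have h7 := (abs_le.mp hXD).2
  have h8 : 1 / 2 * J n * hN α n / hN γ n - η * ((μ + 4) * K) ≤ D := by linarith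
  exact h8

lemma main_abs {γ α : ℝ} (hγ : -1/2 < γ) (hα : -1/2 < α) (hαγ : α < γ) {g : ℝ → ℝ}
    (hg : ContinuousOn g (Icc 0 π))
    (hJ : ∀ m, 0 < ∫ θ in (0:ℝ)..π, g θ * (yG γ m).eval (cos θ) * (sin θ) ^ (2 * γ)) (n : ℕ) :
    0 < ∫ θ in (0:ℝ)..π, g θ * (yG α n).eval (cos θ) * (sin θ) ^ (2 * α) := by
  have h := fun η (hη : 0 < η) => main_step hγ hα hαγ hg (fun m => (hJ m).le) n (η := η) hη
  have h1 := hJ n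
  have h2 := hN_pos n hα
  have h3 := hN_pos n hγ
  have h4 : 0 < 1 / 2 * (∫ θ in (0:ℝ)..π, g θ * (yG γ n).eval (cos θ) * (sin θ) ^ (2 * γ)) * hN α n / hN γ n := by
    positivity
  refine lt_of_lt_of_le h4 ?_
  have key : ∀ A B D : ℝ, (∀ η, 0 < η → A - η * B ≤ D) → A ≤ D := by
    intro A B D h
    have hc : Filter.Tendsto (fun η : ℝ => A - η * B) (nhdsWithin 0 (Ioi 0)) (nhds (A - 0 * B)) :=
      ((by fun_prop : Continuous (fun η : ℝ => A - η * B)).tendsto 0).mono_left nhdsWithin_le_nhds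
    rw [zero_mul, sub_zero] at hc
    exact le_of_tendsto hc (Filter.mem_of_superset self_mem_nhdsWithin h)
  exact key _ _ _ h

lemma FJ_link {γ : ℝ} (hγ : -1/2 < γ) (n : ℕ) {δ t : ℝ} (hδ : 0 < δ) (ht : t ∈ Ioc 0 π) :
    FJ n γ γ δ t = (sJ n (γ - 1/2) / 2 ^ n * (1/2) ^ (2 * γ)) *
      ∫ θ in (0:ℝ)..π, (max (t - θ) 0) ^ δ * (yG γ n).eval (cos θ) * (sin θ) ^ (2 * γ) := by
  have hgc : Continuous (fun θ : ℝ => (max (t - θ) 0) ^ δ) :=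
    Continuous.rpow_const (by fun_prop) (fun _ => Or.inr hδ.le)
  have hi : IntervalIntegrable (fun θ => (max (t - θ) 0) ^ δ * (yG γ n).eval (cos θ) * (sin θ) ^ (2 * γ))
      volume 0 π := hint hγ ((hgc.mul (pcont _)).continuousOn)
  have hsub1 : uIcc 0 t ⊆ uIcc 0 π := by
    rw [uIcc_of_le ht.1.le, uIcc_of_le pi_pos.le]; exact Icc_subset_Icc_right ht.2
  have hsub2 : uIcc t π ⊆ uIcc 0 π := by
    rw [uIcc_of_le ht.2, uIcc_of_le pi_pos.le]; exact Icc_subset_Icc_left ht.1.le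
  rw [← intervalIntegral.integral_add_adjacent_intervals (hi.mono_set hsub1) (hi.mono_set hsub2)]
  have hz : ∫ θ in t..π, (max (t - θ) 0) ^ δ * (yG γ n).eval (cos θ) * (sin θ) ^ (2 * γ) = 0 := by
    have hzz : ∫ θ in t..π, (0:ℝ) = 0 := by simp
    refine Eq.trans ?_ hzz
    apply intervalIntegral.integral_congr
    intro θ hθ
    rw [uIcc_of_le ht.2] at hθ
    have : max (t - θ) 0 = 0 := max_eq_right (by linarith [hθ.1])
    simp only [this, zero_rpow hδ.ne', zero_mul]
  rw [hz, add_zero, ← intervalIntegral.integral_const_mul]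
  unfold FJ
  apply intervalIntegral.integral_congr
  intro θ hθ
  rw [uIcc_of_le ht.1.le] at hθ
  have hm : max (t - θ) 0 = t - θ := max_eq_left (by linarith [hθ.2])
  have hs := sJ_pos n (a := γ - 1/2) (by linarith)
  have h1 : 0 ≤ sin (θ / 2) := sin_nonneg_of_nonneg_of_le_pi (by linarith [hθ.1]) (by linarith [hθ.2, ht.2, hθ.1])
  have h2 : 0 ≤ cos (θ / 2) := cos_nonneg_of_neg_pi_div_two_le_of_le (by linarith [hθ.1, pi_pos]) (by linarith [hθ.2, ht.2])
  have h3 : sin θ = 2 * (sin (θ/2) * cos (θ/2)) := by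
    rw [← mul_assoc, ← sin_two_mul]; congr 1; ring
  have h4 : (sin θ) ^ (2 * γ) = 2 ^ (2 * γ) * ((sin (θ/2)) ^ (2 * γ) * (cos (θ/2)) ^ (2 * γ)) := by
    rw [h3, mul_rpow (by norm_num) (mul_nonneg h1 h2), mul_rpow h1 h2]
  have h5 : ((1/2:ℝ)) ^ (2 * γ) * 2 ^ (2 * γ) = 1 := by
    rw [← mul_rpow (by norm_num) (by norm_num)]; norm_num
  have h6 : sJ n (γ - 1/2) / 2 ^ n * (yG γ n).eval (cos θ) = jacobiP n (γ - 1/2) (γ - 1/2) (cos θ) := by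
    rw [← JP_eval]; unfold yG; rw [eval_mul, eval_C]
    generalize sJ n (γ - 1/2) = z at hs ⊢
    generalize eval (cos θ) (JP n (γ - 1/2)) = w
    field_simp
  simp only [hm, h4, ← h6]
  linear_combination (-(t - θ) ^ δ * (sJ n (γ - 1/2) / 2 ^ n * (yG γ n).eval (cos θ)) *
    (sin (θ/2)) ^ (2 * γ) * (cos (θ/2)) ^ (2 * γ)) * h5

end

theorem FJ_pos_transfer_ultraspherical (γ α : ℝ) (hγ : -1/2 < γ) (hα : -1/2 < α)
    (hαγ : (γ - 1) / 2 < α) (hαγ' : α < γ) (δ : ℝ) (hδ : 0 < δ)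
    (t : ℝ) (ht : t ∈ Set.Ioc (0:ℝ) π)
    (hpos : ∀ n : ℕ, 0 < FJ n γ γ δ t) :
    ∀ n : ℕ, 0 < FJ n α α δ t := by
  have hc : ∀ (n : ℕ) (β : ℝ), -1/2 < β → 0 < sJ n (β - 1/2) / 2 ^ n * (1/2 : ℝ) ^ (2 * β) := by
    intro n β hβ
    have := sJ_pos n (a := β - 1/2) (by linarith)
    positivity
  have hgc : Continuous (fun θ : ℝ => (max (t - θ) 0) ^ δ) :=
    Continuous.rpow_const (by fun_prop) (fun _ => Or.inr hδ.le)
  intro n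
  rw [FJ_link hα n hδ ht]
  refine mul_pos (hc n α hα) ?_
  apply main_abs hγ hα hαγ' hgc.continuousOn
  intro m
  have := hpos m
  rw [FJ_link hγ m hδ ht] at this
  exact (mul_pos_iff_of_pos_left (hc m γ hγ)).mp this
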